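/- Let s > 2, ε, μ ∈ (0,1] and h₀ ∈ (0,1). There exist constants c₁, c₂ > 0, depending only on s (in particular independent of ε, μ, h₀), such that for all Schwartz functions η : ℝ² → ℝ and v = (v₁,v₂) : ℝ² → ℝ² with 1 + ε η(x) ≥ h₀ for all x ∈ ℝ², the energy E_s(η,v) = ∫_{ℝ²} [ (J^s η)² + (1+εη) |J^s T_μ^{−1/2}(D) v|² ] dx satisfies c₁ h₀ ‖(η,v)‖_{V^s_μ}² ≤ E_s(η,v) ≤ c₂ (1 + ε‖η‖_{L^∞} + ε‖v‖_{L^∞}) ‖(η,v)‖_{V^s_μ}². -/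

import Mathlib

noncomputable section

open MeasureTheory SchwartzMap
open scoped FourierTransform ENNReal

/-- The plane `ℝ²` as a Euclidean space. -/
abbrev E2 := EuclideanSpace ℝ (Fin 2)

/-- The Japanese bracket `⟨x⟩ = (1 + x²)^{1/2}`. -/
def jap (x : ℝ) : ℝ := (1 + x ^ 2) ^ ((1 : ℝ) / 2)

/-- The radial symbol `T_μ(ξ) = tanh(√μ |ξ|)/(√μ |ξ|)` for `ξ ≠ 0`, with value `1` at `0`,
expressed through `r = |ξ|`. -/
def Tsymb (μ r : ℝ) : ℝ :=
  if r = 0 then 1 else Real.tanh (Real.sqrt μ * r) / (Real.sqrt μ * r)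

/-- Complexification of a real-valued function on `ℝ²`. -/
def cc2 (f : E2 → ℝ) : E2 → ℂ := fun x => (f x : ℂ)

/-- Generic Fourier multiplier `a(D) g = (a(ξ) ĝ(ξ))^∨` with real symbol `a` on `ℝ²`. -/
def fmul2 (a : E2 → ℝ) (g : E2 → ℂ) : E2 → ℂ :=
  𝓕⁻ (fun ξ : E2 => ((a ξ : ℝ) : ℂ) * 𝓕 g ξ)

/-- The Bessel potential `J^s`, with symbol `⟨ξ⟩^s`. -/
def bessel2 (s : ℝ) (g : E2 → ℂ) : E2 → ℂ := fmul2 (fun ξ => jap ‖ξ‖ ^ s) g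

/-- The operator `J^s T_μ^{−1/2}(D)`, with symbol `⟨ξ⟩^s T_μ(ξ)^{−1/2}`. -/
def JTinv2 (μ s : ℝ) (g : E2 → ℂ) : E2 → ℂ :=
  fmul2 (fun ξ => jap ‖ξ‖ ^ s * Tsymb μ ‖ξ‖ ^ (-(1 : ℝ) / 2)) g

/-- The `H^s`-norm `‖f‖_{H^s} = ‖⟨ξ⟩^s f̂‖_{L²}`. -/
def HsN2 (s : ℝ) (f : E2 → ℂ) : ℝ≥0∞ :=
  eLpNorm (fun ξ : E2 => jap ‖ξ‖ ^ s * ‖𝓕 f ξ‖) 2 volume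

/-- The `H^s`-norm of `|D|^{1/2} f`, that is `‖⟨ξ⟩^s |ξ|^{1/2} f̂‖_{L²}`. -/
def HsDN2 (s : ℝ) (f : E2 → ℂ) : ℝ≥0∞ :=
  eLpNorm (fun ξ : E2 => jap ‖ξ‖ ^ s * ‖ξ‖ ^ ((1 : ℝ) / 2) * ‖𝓕 f ξ‖) 2 volume

/-- The squared `V^s_μ`-norm
`‖(η,v)‖_{V^s_μ}² = ‖η‖_{H^s}² + ‖v‖_{H^s}² + √μ ‖|D|^{1/2} v‖_{H^s}²`. -/
def Vsq (μ s : ℝ) (η v₁ v₂ : E2 → ℝ) : ℝ≥0∞ :=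
  HsN2 s (cc2 η) ^ 2 + HsN2 s (cc2 v₁) ^ 2 + HsN2 s (cc2 v₂) ^ 2 +
    ENNReal.ofReal (Real.sqrt μ) * (HsDN2 s (cc2 v₁) ^ 2 + HsDN2 s (cc2 v₂) ^ 2)

/-- The energy `E_s(η,v) = ∫ (J^s η)² + (1+εη)|J^s T_μ^{−1/2}(D) v|² dx`. -/
def energyWB (μ s ε : ℝ) (η v₁ v₂ : E2 → ℝ) : ℝ≥0∞ :=
  ∫⁻ x : E2, ENNReal.ofReal
    (‖bessel2 s (cc2 η) x‖ ^ 2 +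
      (1 + ε * η x) *
        (‖JTinv2 μ s (cc2 v₁) x‖ ^ 2 + ‖JTinv2 μ s (cc2 v₂) x‖ ^ 2))

lemma fourierInv_cont_aux (F : E2 → ℂ) (hF : Integrable F) : Continuous (𝓕⁻ F) := by
  have h1 : Continuous (𝓕 F) :=
    VectorFourier.fourierIntegral_continuous (L := innerₗ E2) Real.continuous_fourierChar
      continuous_inner hF
  have : 𝓕⁻ F = fun x => 𝓕 F (-x) := by
    ext x
    exact Real.fourierInv_eq_fourier_neg F x
  rw [this]
  exact h1.comp continuous_neg

lemma fourierInv_swap_aux (F : E2 → ℂ) (hF : Integrable F) (g : 𝓢(E2, ℂ)) :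
    ∫ x, g x • 𝓕⁻ F x = ∫ x, (𝓕⁻ g) x • F x := by
  have h := VectorFourier.integral_fourierIntegral_smul_eq_flip (L := -innerₗ E2)
    (μ := volume) (ν := volume) (f := F) (g := fun x => g x) Real.continuous_fourierChar
    (by simpa using! continuous_inner.neg) hF g.integrable
  have e1 : ∀ (G : E2 → ℂ) (x : E2),
      VectorFourier.fourierIntegral Real.fourierChar volume (-innerₗ E2) G x = 𝓕⁻ G x := by
    intro G x
    simp [VectorFourier.fourierIntegral, Real.fourierInv_eq]
  have e2 : ∀ (G : E2 → ℂ) (x : E2),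
      VectorFourier.fourierIntegral Real.fourierChar volume (-innerₗ E2).flip G x = 𝓕⁻ G x := by
    intro G x
    simp [VectorFourier.fourierIntegral, Real.fourierInv_eq, real_inner_comm]
  simp only [e1, e2] at h
  rw [SchwartzMap.fourierInv_coe]
  simp only [smul_eq_mul] at h ⊢
  simp only [mul_comm] at h ⊢
  rw [h]

lemma plancherel_aux (F : E2 → ℂ) (hF : Integrable F) (hF2 : MemLp F 2) :
    eLpNorm (𝓕⁻ F) 2 volume = eLpNorm F 2 volume := by
  set f : Lp (α := E2) ℂ 2 volume := hF2.toLp F with hf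
  have hae : ∀ᵐ x, 𝓕⁻ F x = (𝓕⁻ f : Lp (α := E2) ℂ 2 volume) x := by
    apply ae_eq_of_integral_contDiff_smul_eq
    · exact (fourierInv_cont_aux F hF).locallyIntegrable
    · exact (Lp.memLp _).locallyIntegrable (by norm_num)
    · intro g g_smooth g_cpt
      have hg₁ : HasCompactSupport (Complex.ofRealCLM ∘ g) := g_cpt.comp_left rfl
      have hg₂ : ContDiff ℝ (↑(⊤ : ℕ∞)) (Complex.ofRealCLM ∘ g) := by fun_prop
      set G := hg₁.toSchwartzMap hg₂
      have h1 := fourierInv_swap_aux F hF G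
      have h2 : (𝓕⁻ (Lp.toTemperedDistribution f)) G
          = (Lp.toTemperedDistribution (𝓕⁻ f : Lp (α := E2) ℂ 2 volume)) G := by
        rw [Lp.fourierInv_toTemperedDistribution_eq]
      rw [TemperedDistribution.fourierInv_apply, Lp.toTemperedDistribution_apply,
        Lp.toTemperedDistribution_apply] at h2
      have h3 : ∫ x, (𝓕⁻ G) x • f x = ∫ x, (𝓕⁻ G) x • F x := by
        apply integral_congr_ae
        filter_upwards [MemLp.coeFn_toLp hF2] with x hx
        rw [hf, hx]
      have h4 := h1.trans (h3.symm.trans h2)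
      simpa [G] using h4
  have hn : ‖(𝓕⁻ f : Lp (α := E2) ℂ 2 volume)‖ = ‖f‖ :=
    (Lp.fourierTransformₗᵢ E2 ℂ).symm.norm_map f
  rw [eLpNorm_congr_ae hae, ← eLpNorm_congr_ae (MemLp.coeFn_toLp hF2)]
  rw [Lp.norm_def, Lp.norm_def] at hn
  exact (ENNReal.toReal_eq_toReal_iff' (Lp.eLpNorm_ne_top _) (Lp.eLpNorm_ne_top _)).1 hn

lemma jap_pos_aux (x : ℝ) : 0 < jap x := by unfold jap; positivity

lemma jap_bound_aux (s r : ℝ) (hs : 0 < s) : jap r ^ s ≤ (1 + r ^ 2) ^ ⌈s⌉₊ := by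
  unfold jap
  have h1 : 1 ≤ 1 + r ^ 2 := by nlinarith [sq_nonneg r]
  rw [← Real.rpow_mul (by positivity), ← Real.rpow_natCast (1 + r ^ 2)]
  apply Real.rpow_le_rpow_of_exponent_le h1
  have := Nat.le_ceil s
  linarith

lemma Tsymb_aux (μ r : ℝ) (hμ : 0 < μ) (hr : 0 ≤ r) :
    0 < Tsymb μ r ∧ (1 + √μ * r) / 2 ≤ (Tsymb μ r)⁻¹ ∧ (Tsymb μ r)⁻¹ ≤ 1 + √μ * r := by
  unfold Tsymb
  split_ifs with h
  · subst h; norm_num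
  · have hr' : 0 < r := lt_of_le_of_ne hr (Ne.symm h)
    have hx : 0 < √μ * r := mul_pos (Real.sqrt_pos.2 hμ) hr'
    generalize √μ * r = x at hx
    have hsx : x ≤ Real.sinh x := Real.self_le_sinh_iff.2 hx.le
    have hs0 : 0 < Real.sinh x := by linarith
    have hc0 : 0 < Real.cosh x := Real.cosh_pos x
    have hcs : Real.sinh x < Real.cosh x := Real.sinh_lt_cosh x
    have hd : Real.cosh x - Real.sinh x = Real.exp (-x) := Real.cosh_sub_sinh x
    have hsum : Real.cosh x + Real.sinh x = Real.exp x := Real.cosh_add_sinh x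
    have he : Real.exp (-x) ≤ 1 := Real.exp_le_one_iff.2 (by linarith)
    rw [Real.tanh_eq_sinh_div_cosh]
    have e : (Real.sinh x / Real.cosh x / x)⁻¹ = x * Real.cosh x / Real.sinh x := by
      field_simp
    rw [e]
    refine ⟨by positivity, ?_, ?_⟩
    · -- sinh ≤ x cosh
      have hk : Real.sinh x ≤ x * Real.cosh x := by
        have h2 : 1 - Real.exp (-(2*x)) ≤ 2 * x := by
          have := Real.add_one_le_exp (-(2*x)); linarith
        have h3 : (1 + x) * Real.exp (-x) ≥ (1 - x) * Real.exp x := by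
          by_cases hx1 : 1 ≤ x
          · have : (1 - x) * Real.exp x ≤ 0 :=
              mul_nonpos_of_nonpos_of_nonneg (by linarith) (Real.exp_pos _).le
            have : 0 < (1 + x) * Real.exp (-x) := by positivity
            linarith
          · push Not at hx1
            have hm : MonotoneOn (fun y : ℝ => y * Real.cosh y - Real.sinh y) (Set.Ici 0) := by
              apply monotoneOn_of_deriv_nonneg (convex_Ici 0)
              · fun_prop
              · fun_prop
              · intro y hy
                rw [interior_Ici] at hy
                have hy' : 0 < y := hy
                have : HasDerivAt (fun y : ℝ => y * Real.cosh y - Real.sinh y)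
                    (1 * Real.cosh y + y * Real.sinh y - Real.cosh y) y :=
                  ((hasDerivAt_id y).mul (Real.hasDerivAt_cosh y)).sub (Real.hasDerivAt_sinh y)
                rw [this.deriv]
                have : 0 < Real.sinh y := Real.sinh_pos_iff.2 hy'
                nlinarith [mul_pos hy' this]
            have := hm (Set.mem_Ici.2 le_rfl) (Set.mem_Ici.2 hx.le) hx.le
            simp only [zero_mul, Real.sinh_zero, sub_zero] at this
            nlinarith
        nlinarith
      rw [le_div_iff₀ hs0]
      nlinarith
    · rw [div_le_iff₀ hs0]
      nlinarith

lemma symbol_sq_aux (μ r : ℝ) (hμ : 0 < μ) (hr : 0 ≤ r) :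
    (Tsymb μ r ^ (-(1 : ℝ) / 2)) ^ 2 = (Tsymb μ r)⁻¹ := by
  have h := (Tsymb_aux μ r hμ hr).1
  rw [← Real.rpow_natCast, ← Real.rpow_mul h.le]
  norm_num
  rw [Real.rpow_neg_one]

lemma Tsymb_meas_aux (μ : ℝ) : Measurable (fun ξ : E2 => Tsymb μ ‖ξ‖) := by
  unfold Tsymb
  have : Measurable Real.tanh := by
    have : Real.tanh = fun x => Real.sinh x / Real.cosh x :=
      funext Real.tanh_eq_sinh_div_cosh
    rw [this]; exact Real.measurable_sinh.div Real.measurable_cosh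
  apply Measurable.ite
  · exact measurableSet_eq_fun measurable_norm measurable_const
  · exact measurable_const
  · exact (this.comp (measurable_norm.const_mul _)).div (measurable_norm.const_mul _)

lemma jap_meas_aux (s : ℝ) : Measurable (fun ξ : E2 => jap ‖ξ‖ ^ s) := by
  unfold jap; fun_prop

lemma mult_aux (a : E2 → ℝ) (ha : Measurable a) (C : ℝ) (k : ℕ)
    (hb : ∀ ξ, |a ξ| ≤ C * (1 + ‖ξ‖ ^ 2) ^ k) (g : 𝓢(E2, ℝ)) :
    Continuous (fmul2 a (cc2 g)) ∧
    ∫⁻ x, ENNReal.ofReal (‖fmul2 a (cc2 g) x‖ ^ 2) =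
      ∫⁻ ξ, ENNReal.ofReal (a ξ ^ 2 * ‖𝓕 (cc2 g) ξ‖ ^ 2) := by
  set gc : 𝓢(E2, ℂ) := g.postcompCLM (𝕜 := ℝ) Complex.ofRealCLM with hgc
  have e : cc2 g = gc := by ext x; simp [cc2, hgc]
  have e2 : 𝓕 (cc2 g) = (𝓕 gc : 𝓢(E2, ℂ)) := by rw [e, SchwartzMap.fourier_coe]
  have ht : Function.HasTemperateGrowth (fun ξ : E2 => (((1 + ‖ξ‖ ^ 2) ^ k : ℝ) : ℂ)) := by
    fun_prop
  set P : 𝓢(E2, ℂ) := SchwartzMap.smulLeftCLM ℂ (fun ξ : E2 => (((1 + ‖ξ‖ ^ 2) ^ k : ℝ) : ℂ)) (𝓕 gc)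
    with hP
  have hPx : ∀ ξ, P ξ = (((1 + ‖ξ‖ ^ 2) ^ k : ℝ) : ℂ) * (𝓕 gc : 𝓢(E2, ℂ)) ξ := by
    intro ξ
    rw [hP, SchwartzMap.smulLeftCLM_apply_apply ht, smul_eq_mul]
  set F : E2 → ℂ := fun ξ : E2 => ((a ξ : ℝ) : ℂ) * 𝓕 (cc2 g) ξ with hFdef
  have hFm : AEStronglyMeasurable F volume := by
    apply AEStronglyMeasurable.mul
    · exact (Complex.measurable_ofReal.comp ha).aestronglyMeasurable
    · rw [e2]; exact (SchwartzMap.continuous _).aestronglyMeasurable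
  have hFb : ∀ᵐ ξ, ‖F ξ‖ ≤ ‖(C : ℂ) * P ξ‖ := by
    refine Filter.Eventually.of_forall fun ξ => ?_
    have hp : (0:ℝ) ≤ (1 + ‖ξ‖ ^ 2) ^ k := by positivity
    rw [hPx, hFdef, e2, ← mul_assoc, norm_mul, norm_mul, ← Complex.ofReal_mul, Complex.norm_real,
      Complex.norm_real, Real.norm_eq_abs, Real.norm_eq_abs]
    exact mul_le_mul_of_nonneg_right ((hb ξ).trans (le_abs_self _)) (norm_nonneg _)
  have hF1 : Integrable F := (P.integrable.const_mul (C : ℂ)).mono hFm hFb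
  have hF2 : MemLp F 2 := ((P.memLp 2).const_mul (C : ℂ)).mono hFm hFb
  refine ⟨fourierInv_cont_aux F hF1, ?_⟩
  have hpl := plancherel_aux F hF1 hF2
  have key : ∀ G : E2 → ℂ, ∫⁻ x, ENNReal.ofReal (‖G x‖ ^ 2) = eLpNorm G 2 volume ^ 2 := by
    intro G
    have hh := eLpNorm_nnreal_pow_eq_lintegral (f := G) (p := 2) (μ := volume) (by norm_num)
    simp only [NNReal.coe_ofNat, ENNReal.coe_ofNat, ENNReal.rpow_ofNat] at hh
    rw [hh]
    congr 1; ext x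
    rw [ENNReal.ofReal_pow (norm_nonneg _), ofReal_norm]
  have h1 := key (𝓕⁻ F)
  rw [hpl, ← key F] at h1
  have h2 : fmul2 a (cc2 g) = 𝓕⁻ F := rfl
  rw [h2, h1]
  congr 1; ext ξ
  simp only [hFdef, norm_mul, Complex.norm_real, mul_pow, Real.norm_eq_abs, sq_abs]

lemma sq_eLpNorm_real_aux (G : E2 → ℝ) :
    eLpNorm G 2 volume ^ 2 = ∫⁻ x, ENNReal.ofReal (G x ^ 2) := by
  have hh := eLpNorm_nnreal_pow_eq_lintegral (f := G) (p := 2) (μ := volume) (by norm_num)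
  simp only [NNReal.coe_ofNat, ENNReal.coe_ofNat, ENNReal.rpow_ofNat] at hh
  rw [hh]
  congr 1; ext x
  rw [← sq_abs, ENNReal.ofReal_pow (abs_nonneg _), ← Real.norm_eq_abs, ofReal_norm]

lemma bessel_aux (s : ℝ) (hs : 2 < s) (g : 𝓢(E2, ℝ)) :
    Continuous (bessel2 s (cc2 g)) ∧
    ∫⁻ x, ENNReal.ofReal (‖bessel2 s (cc2 g) x‖ ^ 2) = HsN2 s (cc2 g) ^ 2 := by
  have h := mult_aux (fun ξ => jap ‖ξ‖ ^ s) (jap_meas_aux s) 1 ⌈s⌉₊ (by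
    intro ξ
    have := jap_pos_aux ‖ξ‖
    rw [abs_of_nonneg (by positivity), one_mul]
    exact jap_bound_aux s _ (by linarith)) g
  refine ⟨h.1, ?_⟩
  unfold bessel2 HsN2
  rw [h.2, sq_eLpNorm_real_aux]
  simp only [mul_pow]

lemma fourier_meas_aux (g : 𝓢(E2, ℝ)) : Measurable (fun ξ => ‖𝓕 (cc2 g) ξ‖) := by
  set gc : 𝓢(E2, ℂ) := g.postcompCLM (𝕜 := ℝ) Complex.ofRealCLM with hgc
  have e : cc2 g = gc := by ext x; simp [cc2, hgc]
  have e2 : 𝓕 (cc2 g) = (𝓕 gc : 𝓢(E2, ℂ)) := by rw [e, SchwartzMap.fourier_coe]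
  rw [e2]
  exact (SchwartzMap.continuous _).norm.measurable

lemma JT_aux (s μ : ℝ) (hs : 2 < s) (hμ : 0 < μ) (hμ1 : μ ≤ 1) (g : 𝓢(E2, ℝ)) :
    Continuous (JTinv2 μ s (cc2 g)) ∧
    ENNReal.ofReal (1 / 2) *
        (HsN2 s (cc2 g) ^ 2 + ENNReal.ofReal (√μ) * HsDN2 s (cc2 g) ^ 2)
      ≤ ∫⁻ x, ENNReal.ofReal (‖JTinv2 μ s (cc2 g) x‖ ^ 2) ∧
    ∫⁻ x, ENNReal.ofReal (‖JTinv2 μ s (cc2 g) x‖ ^ 2)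
      ≤ HsN2 s (cc2 g) ^ 2 + ENNReal.ofReal (√μ) * HsDN2 s (cc2 g) ^ 2 := by
  have hmu : √μ ≤ 1 := Real.sqrt_le_one.2 hμ1
  have h := mult_aux (fun ξ => jap ‖ξ‖ ^ s * Tsymb μ ‖ξ‖ ^ (-(1 : ℝ) / 2))
    ((jap_meas_aux s).mul ((Tsymb_meas_aux μ).pow_const _)) 2 (⌈s⌉₊ + 1) (by
    intro ξ
    have h0 := jap_pos_aux ‖ξ‖
    obtain ⟨t0, _, t2⟩ := Tsymb_aux μ ‖ξ‖ hμ (norm_nonneg _)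
    have t3 := symbol_sq_aux μ ‖ξ‖ hμ (norm_nonneg _)
    have t4 : 0 ≤ Tsymb μ ‖ξ‖ ^ (-(1 : ℝ) / 2) := by positivity
    have hn := norm_nonneg ξ
    have t5 : √μ * ‖ξ‖ ≤ ‖ξ‖ := by nlinarith
    have t6 : Tsymb μ ‖ξ‖ ^ (-(1 : ℝ) / 2) ≤ 2 * (1 + ‖ξ‖ ^ 2) := by
      apply le_of_sq_le_sq _ (by positivity)
      rw [t3]
      nlinarith [sq_nonneg (‖ξ‖ - 1), sq_nonneg (‖ξ‖ ^ 2)]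
    rw [abs_of_nonneg (by positivity), pow_succ]
    have := jap_bound_aux s ‖ξ‖ (by linarith)
    calc _ ≤ (1 + ‖ξ‖ ^ 2) ^ ⌈s⌉₊ * (2 * (1 + ‖ξ‖ ^ 2)) := by gcongr
      _ = _ := by ring) g
  refine ⟨h.1, ?_⟩
  have e : ∫⁻ x, ENNReal.ofReal (‖JTinv2 μ s (cc2 g) x‖ ^ 2) =
      ∫⁻ ξ : E2, ENNReal.ofReal ((jap ‖ξ‖ ^ s) ^ 2 * (Tsymb μ ‖ξ‖)⁻¹ * ‖𝓕 (cc2 g) ξ‖ ^ 2) := by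
    unfold JTinv2
    rw [h.2]
    congr 1; ext ξ
    rw [mul_pow, symbol_sq_aux μ ‖ξ‖ hμ (norm_nonneg _)]
  have hm := fourier_meas_aux g
  have hj := jap_meas_aux s
  have e3 : HsN2 s (cc2 g) ^ 2 + ENNReal.ofReal (√μ) * HsDN2 s (cc2 g) ^ 2 =
      ∫⁻ ξ : E2, ENNReal.ofReal ((jap ‖ξ‖ ^ s) ^ 2 * (1 + √μ * ‖ξ‖) * ‖𝓕 (cc2 g) ξ‖ ^ 2) := by
    unfold HsN2 HsDN2
    rw [sq_eLpNorm_real_aux, sq_eLpNorm_real_aux, ← lintegral_const_mul _ (by fun_prop),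
      ← lintegral_add_left (by fun_prop)]
    congr 1; ext ξ
    rw [← ENNReal.ofReal_mul (by positivity), ← ENNReal.ofReal_add (by positivity) (by positivity)]
    congr 1
    have : (‖ξ‖ ^ ((1:ℝ)/2)) ^ 2 = ‖ξ‖ := by
      rw [← Real.rpow_natCast, ← Real.rpow_mul (norm_nonneg _)]; norm_num
    rw [mul_pow, mul_pow, mul_pow, this]; ring
  rw [e, e3]
  constructor
  · rw [← lintegral_const_mul _ (by fun_prop)]
    apply lintegral_mono
    intro ξ
    dsimp only
    rw [← ENNReal.ofReal_mul (by positivity)]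
    apply ENNReal.ofReal_le_ofReal
    have t := (Tsymb_aux μ ‖ξ‖ hμ (norm_nonneg _)).2.1
    calc _ = (jap ‖ξ‖ ^ s) ^ 2 * ((1 + √μ * ‖ξ‖) / 2) * ‖𝓕 (cc2 g) ξ‖ ^ 2 := by ring
      _ ≤ _ := by gcongr
  · apply lintegral_mono
    intro ξ
    apply ENNReal.ofReal_le_ofReal
    have t := (Tsymb_aux μ ‖ξ‖ hμ (norm_nonneg _)).2.2
    gcongr

/-- Equivalence of the energy and the `V^s_μ`-norm (part of Proposition
6.3): for `s > 2` there are `c₁, c₂ > 0`, depending only on `s`, such that for all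
`ε, μ ∈ (0,1]`, `h₀ ∈ (0,1)` and Schwartz `(η, v)` with `1 + εη ≥ h₀`,
`c₁ h₀ ‖(η,v)‖_{V^s_μ}² ≤ E_s(η,v) ≤ c₂ (1 + ε‖η‖_{L^∞} + ε‖v‖_{L^∞}) ‖(η,v)‖_{V^s_μ}²`. -/
theorem energy_equiv_Vnorm (s : ℝ) (hs : 2 < s) :
    ∃ c₁ c₂ : ℝ, 0 < c₁ ∧ 0 < c₂ ∧
      ∀ ε μ h₀ : ℝ, 0 < ε → ε ≤ 1 → 0 < μ → μ ≤ 1 → 0 < h₀ → h₀ < 1 →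
        ∀ η v₁ v₂ : 𝓢(E2, ℝ),
          (∀ x : E2, h₀ ≤ 1 + ε * η x) →
          ENNReal.ofReal (c₁ * h₀) * Vsq μ s (⇑η) (⇑v₁) (⇑v₂)
              ≤ energyWB μ s ε (⇑η) (⇑v₁) (⇑v₂) ∧
            energyWB μ s ε (⇑η) (⇑v₁) (⇑v₂)
              ≤ ENNReal.ofReal
                  (c₂ * (1 + ε * (eLpNorm (⇑η) ⊤ volume).toReal +
                    ε * (eLpNorm (fun x => Real.sqrt ((v₁ x) ^ 2 + (v₂ x) ^ 2)) ⊤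
                          volume).toReal)) *
                Vsq μ s (⇑η) (⇑v₁) (⇑v₂) := by
  refine ⟨1 / 2, 1, by norm_num, by norm_num, ?_⟩
  intro ε μ h₀ hε hε1 hμ hμ1 hh hh1 η v₁ v₂ hpos
  obtain ⟨cη, eη⟩ := bessel_aux s hs η
  obtain ⟨cv1, l1, u1⟩ := JT_aux s μ hs hμ hμ1 v₁
  obtain ⟨cv2, l2, u2⟩ := JT_aux s μ hs hμ hμ1 v₂
  have hV : Vsq μ s (⇑η) (⇑v₁) (⇑v₂) = HsN2 s (cc2 η) ^ 2 +
      ((HsN2 s (cc2 v₁) ^ 2 + ENNReal.ofReal (√μ) * HsDN2 s (cc2 v₁) ^ 2) +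
      (HsN2 s (cc2 v₂) ^ 2 + ENNReal.ofReal (√μ) * HsDN2 s (cc2 v₂) ^ 2)) := by
    unfold Vsq; ring
  have hsplit : ∀ a b : ℝ, 0 ≤ a → 0 ≤ b → ∫⁻ x : E2, ENNReal.ofReal
      (a * ‖bessel2 s (cc2 η) x‖ ^ 2 +
        b * (‖JTinv2 μ s (cc2 v₁) x‖ ^ 2 + ‖JTinv2 μ s (cc2 v₂) x‖ ^ 2)) =
      ENNReal.ofReal a * HsN2 s (cc2 η) ^ 2 + ENNReal.ofReal b *
        ((∫⁻ x, ENNReal.ofReal (‖JTinv2 μ s (cc2 v₁) x‖ ^ 2)) +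
          ∫⁻ x, ENNReal.ofReal (‖JTinv2 μ s (cc2 v₂) x‖ ^ 2)) := by
    intro a b ha hb
    rw [← eη, ← lintegral_const_mul _ (by fun_prop), ← lintegral_add_left (by fun_prop),
      ← lintegral_const_mul _ (by fun_prop), ← lintegral_add_left (by fun_prop)]
    congr 1; ext x
    rw [ENNReal.ofReal_add (by positivity) (by positivity), ENNReal.ofReal_mul ha,
      ENNReal.ofReal_mul hb, ENNReal.ofReal_add (by positivity) (by positivity)]
  rw [hV]
  constructor
  · calc _ ≤ ENNReal.ofReal h₀ * HsN2 s (cc2 η) ^ 2 + ENNReal.ofReal h₀ *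
        ((∫⁻ x, ENNReal.ofReal (‖JTinv2 μ s (cc2 v₁) x‖ ^ 2)) +
          ∫⁻ x, ENNReal.ofReal (‖JTinv2 μ s (cc2 v₂) x‖ ^ 2)) := by
          rw [← mul_add, mul_comm (1 / 2 : ℝ), ENNReal.ofReal_mul hh.le, mul_assoc]
          gcongr
          rw [mul_add, mul_add (ENNReal.ofReal (1 / 2))
            (HsN2 s (cc2 v₁) ^ 2 + ENNReal.ofReal (√μ) * HsDN2 s (cc2 v₁) ^ 2)]
          refine add_le_add ?_ (add_le_add l1 l2)
          exact mul_le_of_le_one_left' (by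
            rw [ENNReal.ofReal_le_one]; norm_num)
      _ = _ := (hsplit h₀ h₀ hh.le hh.le).symm
      _ ≤ _ := by
        unfold energyWB
        apply lintegral_mono
        intro x
        apply ENNReal.ofReal_le_ofReal
        have h := hpos x
        have : h₀ * ‖bessel2 s (cc2 η) x‖ ^ 2 ≤ ‖bessel2 s (cc2 η) x‖ ^ 2 :=
          mul_le_of_le_one_left (by positivity) hh1.le
        gcongr
  · set M := (eLpNorm (⇑η) ⊤ volume).toReal with hM
    set N := (eLpNorm (fun x => √((v₁ x) ^ 2 + (v₂ x) ^ 2)) ⊤ volume).toReal with hN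
    have hM0 : 0 ≤ M := ENNReal.toReal_nonneg
    have hN0 : 0 ≤ N := ENNReal.toReal_nonneg
    set K := 1 * (1 + ε * M + ε * N) with hK
    have hK1 : 1 + ε * M ≤ K := by rw [hK]; nlinarith [mul_nonneg hε.le hN0]
    have hK2 : 1 ≤ K := by nlinarith [mul_nonneg hε.le hM0]
    have hae : ∀ᵐ x, η x ≤ M := by
      have hfin := (η.memLp_top volume).2.ne
      rw [eLpNorm_exponent_top] at hM hfin
      filter_upwards [ae_le_eLpNormEssSup (f := (⇑η)) (μ := volume)] with x hx
      have := ENNReal.toReal_mono hfin hx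
      rw [toReal_enorm, ← hM] at this
      exact (le_abs_self _).trans this
    calc _ ≤ ∫⁻ x : E2, ENNReal.ofReal (K * ‖bessel2 s (cc2 η) x‖ ^ 2 +
        K * (‖JTinv2 μ s (cc2 v₁) x‖ ^ 2 + ‖JTinv2 μ s (cc2 v₂) x‖ ^ 2)) := by
          unfold energyWB
          apply lintegral_mono_ae
          filter_upwards [hae] with x hx
          apply ENNReal.ofReal_le_ofReal
          have h1 : 1 + ε * η x ≤ K := by nlinarith
          have : ‖bessel2 s (cc2 η) x‖ ^ 2 ≤ K * ‖bessel2 s (cc2 η) x‖ ^ 2 :=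
            le_mul_of_one_le_left (by positivity) hK2
          gcongr
      _ = _ := hsplit K K (by linarith) (by linarith)
      _ ≤ _ := by
        rw [← mul_add]
        gcongr
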